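/- arXiv:2511.08988 — 4 statements merged into one kernel-verified Lean document; each statement's English description precedes it below -/
import Mathlib

section
/- Let H be a real Hilbert space, L : H → H a bounded nonnegative self-adjoint linear operator, Δt > 0, A = I + Δt·L, and η ∈ [0,1]. Suppose g, g' ∈ H and real numbers z, z̃, z' satisfy (i) the energy identity 𝒢 := (1/Δt)⟨g' − g, A(g' − g)⟩ = −2 z̃² + 2 z̃ z, and (ii) the relaxation constraint (z')² − z̃² − (z̃ − z)² ≤ η·𝒢. Then (z')² − z² ≤ −(1 − η)·𝒢 ≤ 0; in particular the sequence of squared auxiliary variables is non-increasing (unconditional stability of the relaxed modified SAV scheme for any time step Δt). -/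
open MeasureTheory RealInnerProductSpace

/-- **Unconditional stability of the relaxed modified SAV scheme.**
Let `H` be a real Hilbert space, `L` a bounded nonnegative self-adjoint operator,
`Δt > 0`, `A = I + Δt • L`, `η ∈ [0,1]`.  If the energy identity
`G = (1/Δt)⟪g' - g, A (g' - g)⟫ = -2 z̃² + 2 z̃ z` holds and the relaxation constraint
`z'² - z̃² - (z̃ - z)² ≤ η G` is satisfied, then `z'² - z² ≤ -(1-η) G ≤ 0`. -/
theorem rmsav_unconditional_stability
    {H : Type*} [NormedAddCommGroup H] [InnerProductSpace ℝ H] [CompleteSpace H]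
    (L : H →L[ℝ] H)
    (hL_sa : ∀ v w : H, ⟪L v, w⟫ = ⟪v, L w⟫)
    (hL_nonneg : ∀ v : H, 0 ≤ ⟪v, L v⟫)
    (Δt : ℝ) (hΔt : 0 < Δt)
    (A : H →L[ℝ] H) (hA : A = ContinuousLinearMap.id ℝ H + Δt • L)
    (η : ℝ) (hη : η ∈ Set.Icc (0 : ℝ) 1)
    (g g' : H) (z zt z' : ℝ) (G : ℝ)
    (hG : G = (1 / Δt) * ⟪g' - g, A (g' - g)⟫)
    (henergy : G = -2 * zt ^ 2 + 2 * zt * z)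
    (hrelax : z' ^ 2 - zt ^ 2 - (zt - z) ^ 2 ≤ η * G) :
    z' ^ 2 - z ^ 2 ≤ -(1 - η) * G ∧ -(1 - η) * G ≤ 0 := by
  have hG_nonneg : 0 ≤ G := by
    rw [hG, hA]
    have h : ⟪g' - g, (ContinuousLinearMap.id ℝ H + Δt • L) (g' - g)⟫
        = ‖g' - g‖ ^ 2 + Δt * ⟪g' - g, L (g' - g)⟫ := by
      rw [add_apply, smul_apply, ContinuousLinearMap.id_apply,
        inner_add_right, real_inner_smul_right, real_inner_self_eq_norm_sq]
    rw [h]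
    have := hL_nonneg (g' - g)
    positivity
  constructor
  -- By the energy identity, `zt ^ 2 + (zt - z) ^ 2 - z ^ 2 = -G`.
  · linarith
  · nlinarith [mul_nonneg (sub_nonneg.2 hη.2) hG_nonneg]
end

section
/- Let H be a real Hilbert space, L : H → H a bounded nonnegative self-adjoint linear operator, Δt > 0, and A = I + Δt·L (which is invertible). Fix m ∈ H and set m̂ = A⁻¹ m. Then 1 + (Δt/2)⟨m, m̂⟩ > 0, and for any z ∈ ℝ the unique pair (g', z̃) ∈ H × ℝ satisfying A(g' − g) = −Δt·z̃·m and z̃ − z = (1/2)⟨m, g' − g⟩ is given by z̃ = z / (1 + (Δt/2)⟨m, m̂⟩) and g' = g − Δt·z̃·m̂. -/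
/-!
Since `L` is nonnegative, `A = I + Δt L` is coercive: `‖x‖² ≤ ⟪A x, x⟫`. Coercivity on a Hilbert
space makes `A` bijective (Lax–Milgram), and at `x = m̂` it gives `⟪m, m̂⟫ ≥ 0`, hence the positive
denominator. As `A` is injective, the first relation of the scheme says exactly that
`g' = g - Δt z̃ m̂`; substituting this into the second leaves the scalar linear equation
`z̃ (1 + (Δt/2) ⟪m, m̂⟫) = z`.
-/

open MeasureTheory RealInnerProductSpace

/-- **Explicit closed-form solution of the implicit first-order SAV scheme.**
With `A = I + Δt • L` invertible, `m̂ = A⁻¹ m` (expressed via `A m̂ = m`), one has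
`1 + (Δt/2)⟪m, m̂⟫ > 0`, and the unique pair `(g', z̃)` satisfying the scheme
relations `A (g' - g) = -Δt z̃ • m` and `z̃ - z = (1/2)⟪m, g' - g⟫` is given by
`z̃ = z / (1 + (Δt/2)⟪m, m̂⟫)` and `g' = g - Δt z̃ • m̂`. -/
theorem sav_closed_form_solution
    {H : Type*} [NormedAddCommGroup H] [InnerProductSpace ℝ H] [CompleteSpace H]
    (L : H →L[ℝ] H)
    (hL_sa : ∀ v w : H, ⟪L v, w⟫ = ⟪v, L w⟫)
    (hL_nonneg : ∀ v : H, 0 ≤ ⟪v, L v⟫)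
    (Δt : ℝ) (hΔt : 0 < Δt)
    (A : H →L[ℝ] H) (hA : A = ContinuousLinearMap.id ℝ H + Δt • L)
    (m mhat : H) (hmhat : A mhat = m)
    (g : H) (z : ℝ) :
    Function.Bijective (⇑A) ∧
    0 < 1 + (Δt / 2) * ⟪m, mhat⟫ ∧
    ∀ (g' : H) (zt : ℝ),
      (A (g' - g) = -((Δt * zt) • m) ∧ zt - z = (1 / 2) * ⟪m, g' - g⟫) ↔
      (zt = z / (1 + (Δt / 2) * ⟪m, mhat⟫) ∧ g' = g - (Δt * zt) • mhat) := by
  have hcoer : ∀ x : H, ‖x‖ ^ 2 ≤ ⟪A x, x⟫ := by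
    intro x
    have h : ⟪A x, x⟫ = ‖x‖ ^ 2 + Δt * ⟪x, L x⟫ := by
      simp [hA, inner_add_left, inner_smul_left, hL_sa]
    rw [h]
    linarith [mul_nonneg hΔt.le (hL_nonneg x)]
  have hbij : Function.Bijective (⇑A) := by
    rw [← ContinuousLinearMap.isUnit_iff_bijective]
    refine ContinuousLinearMap.isUnit_of_forall_le_norm_inner_map A (c := 1) one_pos fun x => ?_
    rw [NNReal.coe_one, mul_one]
    exact (hcoer x).trans (Real.le_norm_self _)
  have hpos : 0 < 1 + (Δt / 2) * ⟪m, mhat⟫ := by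
    have h : 0 ≤ ⟪m, mhat⟫ := by
      rw [← hmhat]
      exact (sq_nonneg _).trans (hcoer mhat)
    positivity
  refine ⟨hbij, hpos, fun g' zt => ?_⟩
  have hfirst : A (g' - g) = -((Δt * zt) • m) ↔ g' = g - (Δt * zt) • mhat := by
    have h : -((Δt * zt) • m) = A (-((Δt * zt) • mhat)) := by
      rw [map_neg, map_smul, hmhat]
    rw [h, hbij.injective.eq_iff, sub_eq_iff_eq_add', sub_eq_add_neg]
  rw [hfirst, and_comm]
  refine and_congr_left fun hg => ?_
  have hinner : ⟪m, g' - g⟫ = -(Δt * zt * ⟪m, mhat⟫) := by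
    rw [hg, sub_sub_cancel_left, inner_neg_right, inner_smul_right]
  rw [hinner, eq_div_iff hpos.ne']
  constructor <;> intro h <;> linarith
end

section
/- Let û ∈ Λ₂ be a minimizer over Λ₂ of the ICTM energy E(u) = Σ_{i=1}^n λ_i ∫_Ω u_i e_i dx + μ √(π/τ) Σ_{i=1}^n Σ_{j≠i} ∫_Ω u_i (G_τ * u_j) dx. Then û ∈ Λ₁, i.e., almost every x ∈ Ω satisfies û_i(x) ∈ {0,1} for every i, and û is also a minimizer of E over Λ₁. -/
/-!
Write `B(f, g) = ∫_Ω f (G_τ * g)` and suppose that two components `û_i`, `û_j` are both at least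
`δ > 0` on a set `A ⊆ Ω` of positive measure. Moving the mass `w = δ 1_A` from `j` to `i`, or from
`i` to `j`, gives two competitors `u⁺, u⁻ ∈ Λ₂` whose midpoint is `û`. The fidelity term is linear
and the interaction term is quadratic, so
`E(u⁺) + E(u⁻) - 2 E(û) = 2 μ √(π/τ) ∑_k ∑_{l ≠ k} s_k s_l B(w, w) = -4 μ √(π/τ) B(w, w)`,
where `s` is `1` at `i`, `-1` at `j` and `0` elsewhere. Since `G_τ > 0` pointwise, `B(w, w) > 0`,
and one of the competitors has energy strictly below `E(û)`, contradicting minimality. Hence for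
a.e. `x` at most one component is positive, and since the components sum to one they are all `0`
or `1`. Minimality over `Λ₁` is immediate from `Λ₁ ⊆ Λ₂`.

The lemmas carrying this are `interaction_parallelogram`, `interaction_self_pos` and
`energy_second_difference`.
-/


open MeasureTheory Real

noncomputable section

/-- The two-dimensional Gaussian (heat) kernel `G_τ(x) = (4πτ)⁻¹ exp(-|x|²/(4τ))`. -/
def gauss (τ : ℝ) (x : EuclideanSpace ℝ (Fin 2)) : ℝ :=
  (4 * π * τ)⁻¹ * Real.exp (-‖x‖ ^ 2 / (4 * τ))

/-- Convolution on `ℝ²`: `(k * v)(x) = ∫ k(x - y) v(y) dy`. -/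
def gconv (k v : EuclideanSpace ℝ (Fin 2) → ℝ) (x : EuclideanSpace ℝ (Fin 2)) : ℝ :=
  ∫ y, k (x - y) * v y

/-- Membership in `Λ₁`: measurable functions `u = (u₁, …, uₙ)`, extended by zero
outside `Ω`, with `uᵢ(x) ∈ {0,1}` and `∑ᵢ uᵢ(x) = 1` for a.e. `x ∈ Ω`. -/
def InLambda1 {n : ℕ} (Ω : Set (EuclideanSpace ℝ (Fin 2)))
    (u : Fin n → EuclideanSpace ℝ (Fin 2) → ℝ) : Prop :=
  (∀ i, Measurable (u i)) ∧ (∀ i, ∀ x, x ∉ Ω → u i x = 0) ∧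
  (∀ᵐ x ∂(volume.restrict Ω), (∀ i, u i x = 0 ∨ u i x = 1) ∧ (∑ i, u i x) = 1)

/-- Membership in `Λ₂` (the convex relaxation of `Λ₁`): measurable functions,
extended by zero outside `Ω`, with `uᵢ(x) ∈ [0,1]` and `∑ᵢ uᵢ(x) = 1` a.e. on `Ω`. -/
def InLambda2 {n : ℕ} (Ω : Set (EuclideanSpace ℝ (Fin 2)))
    (u : Fin n → EuclideanSpace ℝ (Fin 2) → ℝ) : Prop :=
  (∀ i, Measurable (u i)) ∧ (∀ i, ∀ x, x ∉ Ω → u i x = 0) ∧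
  (∀ᵐ x ∂(volume.restrict Ω), (∀ i, u i x ∈ Set.Icc (0 : ℝ) 1) ∧ (∑ i, u i x) = 1)

/-- The ICTM segmentation energy
`E(u) = ∑ᵢ λᵢ ∫_Ω uᵢ eᵢ + μ √(π/τ) ∑ᵢ ∑_{j≠i} ∫_Ω uᵢ (G_τ * uⱼ)`. -/
def ictmEnergy {n : ℕ} (Ω : Set (EuclideanSpace ℝ (Fin 2))) (τ μ : ℝ)
    (lam : Fin n → ℝ) (e u : Fin n → EuclideanSpace ℝ (Fin 2) → ℝ) : ℝ :=
  (∑ i, lam i * ∫ x in Ω, u i x * e i x) +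
    μ * Real.sqrt (π / τ) *
      ∑ i, ∑ j ∈ Finset.univ.erase i, ∫ x in Ω, u i x * gconv (gauss τ) (u j) x

local notation "E2" => EuclideanSpace ℝ (Fin 2)

/-! ### The Gaussian kernel and its convolutions -/

lemma gauss_pos {τ : ℝ} (hτ : 0 < τ) (x : E2) : 0 < gauss τ x := by
  unfold gauss; positivity

lemma gauss_le {τ : ℝ} (hτ : 0 < τ) (x : E2) : gauss τ x ≤ (4 * π * τ)⁻¹ := by
  unfold gauss
  have h : Real.exp (-‖x‖ ^ 2 / (4 * τ)) ≤ 1 := by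
    rw [Real.exp_le_one_iff, neg_div]
    have : 0 ≤ ‖x‖ ^ 2 / (4 * τ) := by positivity
    linarith
  exact mul_le_of_le_one_right (by positivity) h

lemma gauss_continuous (τ : ℝ) : Continuous (gauss τ) := by
  unfold gauss; fun_prop

lemma integrable_gauss_mul {τ : ℝ} (hτ : 0 < τ) {f : E2 → ℝ} (hf : Integrable f) (x : E2) :
    Integrable (fun y => gauss τ (x - y) * f y) := by
  refine hf.bdd_mul (c := (4 * π * τ)⁻¹) ?_ ?_
  · exact ((gauss_continuous τ).comp (by fun_prop)).aestronglyMeasurable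
  · refine Filter.Eventually.of_forall fun y => ?_
    rw [Real.norm_of_nonneg (gauss_pos hτ _).le]
    exact gauss_le hτ _

lemma gconv_measurable (τ : ℝ) {f : E2 → ℝ} (hf : Measurable f) :
    StronglyMeasurable (gconv (gauss τ) f) := by
  unfold gconv
  refine StronglyMeasurable.integral_prod_right (f := fun x y => gauss τ (x - y) * f y) ?_
  apply Measurable.stronglyMeasurable
  have := (gauss_continuous τ).measurable
  show Measurable fun p : E2 × E2 => gauss τ (p.1 - p.2) * f p.2
  exact (this.comp (by fun_prop)).mul (hf.comp measurable_snd)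

lemma gconv_bound {τ : ℝ} (hτ : 0 < τ) {f : E2 → ℝ} (hf : Integrable f) (x : E2) :
    ‖gconv (gauss τ) f x‖ ≤ (4 * π * τ)⁻¹ * ∫ y, ‖f y‖ := by
  unfold gconv
  rw [← integral_const_mul]
  refine norm_integral_le_of_norm_le (hf.norm.const_mul _) (Filter.Eventually.of_forall fun y => ?_)
  rw [norm_mul, Real.norm_of_nonneg (gauss_pos hτ _).le]
  exact mul_le_mul_of_nonneg_right (gauss_le hτ _) (norm_nonneg _)

lemma integrable_mul_gconv {τ : ℝ} (hτ : 0 < τ) {f g : E2 → ℝ} (hf : Integrable f)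
    (hg : Integrable g) (hgm : Measurable g) (Ω : Set E2) :
    IntegrableOn (fun x => f x * gconv (gauss τ) g x) Ω :=
  (hf.mul_bdd (c := (4 * π * τ)⁻¹ * ∫ y, ‖g y‖) (gconv_measurable τ hgm).aestronglyMeasurable
    (Filter.Eventually.of_forall fun x => gconv_bound hτ hg x)).integrableOn

/-! ### The interaction form and the second difference of the energy -/

/-- Second difference of the bilinear interaction along `(f, g) ± (a w, b w)`: the mixed terms
cancel, leaving `2 a b ∫_Ω w (G_τ * w)`. -/
lemma interaction_parallelogram {τ : ℝ} (hτ : 0 < τ) (Ω : Set E2) {f g w : E2 → ℝ}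
    (hf : Integrable f) (hg : Integrable g) (hw : Integrable w)
    (hgm : Measurable g) (hwm : Measurable w) (a b : ℝ) :
    (∫ x in Ω, (f x + a * w x) * gconv (gauss τ) (fun y => g y + b * w y) x) +
      (∫ x in Ω, (f x + -a * w x) * gconv (gauss τ) (fun y => g y + -b * w y) x) =
    2 * (∫ x in Ω, f x * gconv (gauss τ) g x) +
      2 * (a * b) * ∫ x in Ω, w x * gconv (gauss τ) w x := by
  have hlin : ∀ c x, gconv (gauss τ) (fun y => g y + c * w y) x =
      gconv (gauss τ) g x + c * gconv (gauss τ) w x := by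
    intro c x
    unfold gconv
    rw [← integral_const_mul, ← integral_add (integrable_gauss_mul hτ hg x)
      ((integrable_gauss_mul hτ hw x).const_mul c)]
    congr 1; ext y; ring
  have i1 := integrable_mul_gconv hτ (hf.add (hw.const_mul a)) (hg.add (hw.const_mul b))
    (hgm.add (hwm.const_mul b)) Ω
  have i2 := integrable_mul_gconv hτ (hf.add (hw.const_mul (-a))) (hg.add (hw.const_mul (-b)))
    (hgm.add (hwm.const_mul (-b))) Ω
  have i3 := integrable_mul_gconv hτ hf hg hgm Ω
  have i4 := integrable_mul_gconv hτ hw hw hwm Ω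
  rw [← integral_const_mul, ← integral_const_mul, ← integral_add (i3.const_mul _) (i4.const_mul _)]
  refine (integral_add i1 i2).symm.trans ?_
  congr 1; ext x
  have e1 := hlin b x
  have e2 := hlin (-b) x
  simp only [Pi.add_apply]
  change (f x + a * w x) * gconv (gauss τ) (fun y => g y + b * w y) x +
    (f x + -a * w x) * gconv (gauss τ) (fun y => g y + -b * w y) x = _
  rw [e1, e2]; ring

/-- Only the pointwise positivity of the Gaussian kernel is used. -/
lemma interaction_self_pos {τ : ℝ} (hτ : 0 < τ) {Ω A : Set E2} (hA : A ⊆ Ω)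
    (hAm : MeasurableSet A) (hApos : 0 < volume A) (hAfin : volume A ≠ ⊤) {δ : ℝ} (hδ : 0 < δ) :
    0 < ∫ x in Ω, A.indicator (fun _ => δ) x * gconv (gauss τ) (A.indicator fun _ => δ) x := by
  have hwm : Measurable (A.indicator fun _ : E2 => δ) := measurable_const.indicator hAm
  have hw : Integrable (A.indicator fun _ : E2 => δ) :=
    (integrable_indicator_iff hAm).2 (integrableOn_const hAfin)
  have hw0 : ∀ x, 0 ≤ A.indicator (fun _ : E2 => δ) x :=
    fun x => Set.indicator_nonneg (fun _ _ => hδ.le) x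
  have hconv : ∀ x, 0 < gconv (gauss τ) (A.indicator fun _ => δ) x := by
    intro x
    unfold gconv
    rw [integral_pos_iff_support_of_nonneg
      (fun y => mul_nonneg (gauss_pos hτ _).le (hw0 y)) (integrable_gauss_mul hτ hw x)]
    refine hApos.trans_le (measure_mono fun y hy => ?_)
    simp [(gauss_pos hτ _).ne', hδ.ne', hy]
  rw [integral_pos_iff_support_of_nonneg
    (fun x => mul_nonneg (hw0 x) (hconv x).le) (integrable_mul_gconv hτ hw hw hwm Ω)]
  have hAΩ : volume.restrict Ω A = volume A := Measure.restrict_eq_self _ hA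
  refine (hAΩ ▸ hApos).trans_le (measure_mono fun x hx => ?_)
  simp [(hconv x).ne', hδ.ne', hx]

/-- Second difference of the energy along `û ± s w`. As `∑ s = 0`, the interaction contributes
`∑_k ∑_{l ≠ k} s_k s_l = -∑_k s_k²`. -/
lemma energy_second_difference {n : ℕ} {τ : ℝ} (hτ : 0 < τ) (Ω : Set E2) (μ : ℝ)
    (lam : Fin n → ℝ) (e u : Fin n → E2 → ℝ) {w : E2 → ℝ}
    (hum : ∀ i, Measurable (u i)) (hu : ∀ i, Integrable (u i))
    (hwm : Measurable w) (hw : Integrable w)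
    (hue : ∀ i, IntegrableOn (fun x => u i x * e i x) Ω)
    (hwe : ∀ i, IntegrableOn (fun x => w x * e i x) Ω)
    (s : Fin n → ℝ) (hs : ∑ k, s k = 0) :
    ictmEnergy Ω τ μ lam e (fun k x => u k x + s k * w x) +
      ictmEnergy Ω τ μ lam e (fun k x => u k x + -s k * w x) =
    2 * ictmEnergy Ω τ μ lam e u - 2 * (μ * Real.sqrt (π / τ)) * (∑ k, s k ^ 2) *
      ∫ x in Ω, w x * gconv (gauss τ) w x := by
  unfold ictmEnergy
  set B := ∫ x in Ω, w x * gconv (gauss τ) w x with hB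
  have hfid : ∀ k, ∀ c : ℝ, (∫ x in Ω, (u k x + c * w x) * e k x) =
      (∫ x in Ω, u k x * e k x) + c * ∫ x in Ω, w x * e k x := by
    intro k c
    rw [← integral_const_mul, ← integral_add (hue k) ((hwe k).const_mul c)]
    congr 1; ext x; ring
  have h1 : (∑ k, lam k * ∫ x in Ω, (u k x + s k * w x) * e k x) +
      (∑ k, lam k * ∫ x in Ω, (u k x + -s k * w x) * e k x) =
      2 * ∑ k, lam k * ∫ x in Ω, u k x * e k x := by
    rw [← Finset.sum_add_distrib, Finset.mul_sum]
    refine Finset.sum_congr rfl fun k _ => ?_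
    rw [hfid, hfid]; ring
  have hs2 : ∑ k, ∑ l ∈ Finset.univ.erase k, s k * s l = -∑ k, s k ^ 2 := by
    rw [← Finset.sum_neg_distrib]
    refine Finset.sum_congr rfl fun k _ => ?_
    rw [← Finset.mul_sum]
    have := Finset.add_sum_erase Finset.univ s (Finset.mem_univ k)
    rw [hs] at this
    rw [show ∑ l ∈ Finset.univ.erase k, s l = -s k by linarith]; ring
  have h2 : (∑ k, ∑ l ∈ Finset.univ.erase k,
        ∫ x in Ω, (u k x + s k * w x) * gconv (gauss τ) (fun y => u l y + s l * w y) x) +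
      (∑ k, ∑ l ∈ Finset.univ.erase k,
        ∫ x in Ω, (u k x + -s k * w x) * gconv (gauss τ) (fun y => u l y + -s l * w y) x) =
      2 * (∑ k, ∑ l ∈ Finset.univ.erase k, ∫ x in Ω, u k x * gconv (gauss τ) (u l) x) +
      2 * (-∑ k, s k ^ 2) * B := by
    rw [← hs2]
    simp only [Finset.mul_sum, Finset.sum_mul, ← Finset.sum_add_distrib]
    refine Finset.sum_congr rfl fun k _ => Finset.sum_congr rfl fun l _ => ?_
    exact interaction_parallelogram hτ Ω (hu k) (hu l) hw (hum l) hwm (s k) (s l)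
  linear_combination h1 + μ * Real.sqrt (π / τ) * h2

/-! ### Admissible perturbations of a minimizer -/

lemma lambda2_integrable {n : ℕ} {Ω : Set E2} (hΩm : MeasurableSet Ω) (hΩfin : volume Ω ≠ ⊤)
    {u : Fin n → E2 → ℝ} (hu : InLambda2 Ω u) (i : Fin n) : Integrable (u i) := by
  obtain ⟨hm, h0, hae⟩ := hu
  have : IntegrableOn (u i) Ω := by
    refine Measure.integrableOn_of_bounded (M := 1) hΩfin (hm i).aestronglyMeasurable ?_
    filter_upwards [hae] with x hx
    rw [Real.norm_of_nonneg (hx.1 i).1]; exact (hx.1 i).2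
  rw [← integrable_indicator_iff hΩm] at this
  refine this.congr (Filter.Eventually.of_forall fun x => ?_)
  by_cases hx : x ∈ Ω
  · simp [hx]
  · simp [hx, h0 i x hx]

/-- Transporting mass between components on `A` stays in `Λ₂` as long as no component becomes
negative there: the upper bound `1` follows from the preserved sum. -/
lemma lambda2_perturb {n : ℕ} {Ω A : Set E2} {u : Fin n → E2 → ℝ} (hu : InLambda2 Ω u)
    (hA : A ⊆ Ω) (hAm : MeasurableSet A) {δ : ℝ} {s : Fin n → ℝ}
    (hs : ∑ k, s k = 0) (hs1 : ∀ x ∈ A, ∀ k, 0 ≤ u k x + s k * δ) :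
    InLambda2 Ω (fun k x => u k x + s k * A.indicator (fun _ => δ) x) := by
  obtain ⟨hm, h0, hae⟩ := hu
  refine ⟨fun k => (hm k).add ((measurable_const.indicator hAm).const_mul _), ?_, ?_⟩
  · intro k x hx
    have : x ∉ A := fun h => hx (hA h)
    simp [this, h0 k x hx]
  · filter_upwards [hae] with x hx
    have hsum : ∑ k, (u k x + s k * A.indicator (fun _ => δ) x) = 1 := by
      rw [Finset.sum_add_distrib, ← Finset.sum_mul, hs, hx.2]; ring
    have hnn : ∀ k, 0 ≤ u k x + s k * A.indicator (fun _ => δ) x := by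
      intro k
      by_cases hxA : x ∈ A
      · simpa [hxA] using hs1 x hxA k
      · simpa [hxA] using (hx.1 k).1
    refine ⟨fun k => ⟨hnn k, ?_⟩, hsum⟩
    rw [← hsum]
    exact Finset.single_le_sum (f := fun k => u k x + s k * A.indicator (fun _ => δ) x)
      (fun l _ => hnn l) (Finset.mem_univ k)

/-- Two distinct components of a minimizer cannot both be at least `δ > 0` on a set of positive
measure. -/
lemma overlap_null {n : ℕ} {Ω : Set E2} (hΩm : MeasurableSet Ω) (hΩfin : volume Ω ≠ ⊤)
    {τ μ : ℝ} (hτ : 0 < τ) (hμ : 0 < μ) {lam : Fin n → ℝ} {e : Fin n → E2 → ℝ}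
    (he_int : ∀ i, IntegrableOn (e i) Ω) {u : Fin n → E2 → ℝ} (hu : InLambda2 Ω u)
    (hmin : ∀ v, InLambda2 Ω v → ictmEnergy Ω τ μ lam e u ≤ ictmEnergy Ω τ μ lam e v)
    {i j : Fin n} (hij : i ≠ j) {δ : ℝ} (hδ : 0 < δ) :
    volume (Ω ∩ {x | δ ≤ u i x ∧ δ ≤ u j x}) = 0 := by
  by_contra hne
  set A := Ω ∩ {x | δ ≤ u i x ∧ δ ≤ u j x} with hAdef
  have hA : A ⊆ Ω := Set.inter_subset_left
  have hm := hu.1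
  have hAm : MeasurableSet A := hΩm.inter
    ((measurableSet_le measurable_const (hm i)).inter (measurableSet_le measurable_const (hm j)))
  have hAfin : volume A ≠ ⊤ := ne_top_of_le_ne_top hΩfin (measure_mono hA)
  have hApos : 0 < volume A := pos_iff_ne_zero.2 hne
  -- The null set where `u k x < 0` is removed from `A`, so that the perturbed functions are
  -- controlled at every point of the remaining set.
  set A' := A ∩ {x | ∀ k, 0 ≤ u k x} with hA'def
  have hA'm : MeasurableSet A' := hAm.inter (by
    rw [Set.ofPred_forall]
    exact MeasurableSet.iInter fun k => measurableSet_le measurable_const (hm k))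
  have hA' : A' ⊆ Ω := Set.inter_subset_left.trans hA
  have hA'eq : volume A' = volume A := by
    refine measure_congr ?_
    have := (ae_restrict_iff' hΩm).1 hu.2.2
    filter_upwards [this] with x hx
    refine propext ⟨fun h => h.1, fun h => ⟨h, fun k => ((hx (hA h)).1 k).1⟩⟩
  have hB := interaction_self_pos hτ hA' hA'm (hA'eq ▸ hApos) (hA'eq ▸ hAfin) hδ
  set s : Fin n → ℝ := fun k => (if k = i then 1 else 0) - (if k = j then 1 else 0) with hsdef
  have hs : ∑ k, s k = 0 := by simp [hsdef, Finset.sum_sub_distrib]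
  have hs' : ∑ k, -s k = 0 := by rw [Finset.sum_neg_distrib, hs, neg_zero]
  have hsq : 0 < ∑ k, s k ^ 2 := by
    refine Finset.sum_pos' (fun k _ => sq_nonneg _) ⟨i, Finset.mem_univ i, ?_⟩
    simp [hsdef, hij]
  have hcase : ∀ x ∈ A', ∀ k, 0 ≤ u k x + s k * δ ∧ 0 ≤ u k x + -s k * δ := by
    intro x hx k
    have h1 : δ ≤ u i x := hx.1.2.1
    have h2 : δ ≤ u j x := hx.1.2.2
    have h3 : 0 ≤ u k x := hx.2 k
    by_cases hki : k = i
    · subst hki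
      simp only [hsdef, if_true, if_neg hij]
      constructor <;> linarith
    · by_cases hkj : k = j
      · subst hkj
        simp only [hsdef, if_true, if_neg hki]
        constructor <;> linarith
      · simpa [hsdef, hki, hkj] using h3
  have hp := hmin _ (lambda2_perturb hu hA' hA'm hs fun x hx k => (hcase x hx k).1)
  have hq := hmin _ (lambda2_perturb (s := fun k => -s k) hu hA' hA'm hs'
    fun x hx k => (hcase x hx k).2)
  have hwm : Measurable (A'.indicator fun _ : E2 => δ) := measurable_const.indicator hA'm
  have hw : Integrable (A'.indicator fun _ : E2 => δ) :=
    (integrable_indicator_iff hA'm).2 (integrableOn_const (hA'eq ▸ hAfin))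
  have hue : ∀ k, IntegrableOn (fun x => u k x * e k x) Ω := by
    intro k
    refine Integrable.bdd_mul (c := 1) (he_int k) (hm k).aestronglyMeasurable ?_
    filter_upwards [hu.2.2] with x hx
    rw [Real.norm_of_nonneg (hx.1 k).1]; exact (hx.1 k).2
  have hwe : ∀ k, IntegrableOn (fun x => A'.indicator (fun _ => δ) x * e k x) Ω := by
    intro k
    refine Integrable.bdd_mul (c := δ) (he_int k) hwm.aestronglyMeasurable ?_
    refine Filter.Eventually.of_forall fun x => ?_
    by_cases hx : x ∈ A' <;> simp [hx, abs_of_pos hδ, hδ.le]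
  have key := energy_second_difference hτ Ω μ lam e u hm (lambda2_integrable hΩm hΩfin hu)
    hwm hw hue hwe s hs
  have hpos : 0 < 2 * (μ * Real.sqrt (π / τ)) * (∑ k, s k ^ 2) *
      ∫ x in Ω, A'.indicator (fun _ => δ) x * gconv (gauss τ) (A'.indicator fun _ => δ) x := by
    have : 0 < Real.sqrt (π / τ) := Real.sqrt_pos.2 (by positivity)
    positivity
  linarith

/-- **Relaxed minimizers of the ICTM energy are binary.**
A minimizer `û` of the ICTM energy over `Λ₂` belongs to `Λ₁` (a.e. on `Ω` each
component takes values in `{0,1}`), and it also minimizes the energy over `Λ₁`. -/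
theorem relaxed_minimizer_is_binary {n : ℕ} (hn : 2 ≤ n)
    (Ω : Set (EuclideanSpace ℝ (Fin 2))) (hΩm : MeasurableSet Ω)
    (hΩb : Bornology.IsBounded Ω) (hΩpos : 0 < volume Ω) (hΩfin : volume Ω ≠ ⊤)
    (τ μ : ℝ) (hτ : 0 < τ) (hμ : 0 < μ)
    (lam : Fin n → ℝ) (hlam : ∀ i, 0 < lam i)
    (e : Fin n → EuclideanSpace ℝ (Fin 2) → ℝ)
    (he_meas : ∀ i, Measurable (e i))
    (he_int : ∀ i, IntegrableOn (e i) Ω)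
    (he_nonneg : ∀ i x, 0 ≤ e i x)
    (uhat : Fin n → EuclideanSpace ℝ (Fin 2) → ℝ)
    (huhat : InLambda2 Ω uhat)
    (hmin : ∀ u, InLambda2 Ω u →
      ictmEnergy Ω τ μ lam e uhat ≤ ictmEnergy Ω τ μ lam e u) :
    InLambda1 Ω uhat ∧
      ∀ u, InLambda1 Ω u →
        ictmEnergy Ω τ μ lam e uhat ≤ ictmEnergy Ω τ μ lam e u := by
  refine ⟨⟨huhat.1, huhat.2.1, ?_⟩, fun u hu => hmin u ⟨hu.1, hu.2.1, ?_⟩⟩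
  · have hnull : ∀ᵐ x ∂(volume.restrict Ω), ∀ i j : Fin n, i ≠ j → ∀ N : ℕ,
        ¬ (1 / ((N : ℝ) + 1) ≤ uhat i x ∧ 1 / ((N : ℝ) + 1) ≤ uhat j x) := by
      simp only [ae_all_iff]
      intro i j hij N
      rw [ae_restrict_iff' hΩm, ae_iff]
      have h := overlap_null hΩm hΩfin hτ hμ he_int huhat hmin hij
        (Nat.one_div_pos_of_nat (α := ℝ) (n := N))
      convert h using 2
      ext x
      simp
      tauto
    filter_upwards [huhat.2.2, hnull] with x hx hx'
    refine ⟨fun i => ?_, hx.2⟩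
    rcases (hx.1 i).1.eq_or_lt with h | hi
    · exact Or.inl h.symm
    · right
      have hsum : ∑ k, uhat k x = uhat i x := by
        refine Finset.sum_eq_single i (fun j _ hji => ?_) (fun h => absurd (Finset.mem_univ i) h)
        by_contra hj
        have hj' : 0 < uhat j x := lt_of_le_of_ne (hx.1 j).1 (Ne.symm hj)
        obtain ⟨N, hN⟩ := exists_nat_one_div_lt (lt_min hi hj')
        exact hx' i j hji.symm N
          ⟨hN.le.trans (min_le_left _ _), hN.le.trans (min_le_right _ _)⟩
      exact hsum.symm.trans hx.2
  · filter_upwards [hu.2.2] with x hx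
    refine ⟨fun i => ?_, hx.2⟩
    rcases hx.1 i with h | h <;> rw [h] <;> simp
end
end

section
/- Let u^k ∈ Λ₁ and define φ_i^k = λ_i e_i + 2 μ √(π/τ) Σ_{j≠i} G_τ * u_j^k for i = 1,…,n. Define u^{k+1} by the thresholding rule u_i^{k+1}(x) = 1 if i = argmin_{l ∈ {1,…,n}} φ_l^k(x) (ties broken by choosing the smallest index) and u_i^{k+1}(x) = 0 otherwise. Then u^{k+1} ∈ Λ₁ and, for any τ > 0, the ICTM energy does not increase: E(u^{k+1}) ≤ E(u^k). -/
/-!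
The energy is a linear part plus a quadratic one. With `b f g = ∫ f (G_τ * g)` (`gaussForm`),
symmetric and bilinear on integrable functions, and `w = u' - u`, the change of energy is

  `∑ᵢ ∫_Ω φᵢ wᵢ + μ √(π/τ) ∑_{i ≠ j} b wᵢ wⱼ`.

The first sum is nonpositive because `u'` puts all its mass on a minimizer of `l ↦ φₗ(x)`, while `u`
is a convex combination (`exists_first_min`). Since `∑ᵢ wᵢ = 0` a.e., the second one equals
`-∑ᵢ b wᵢ wᵢ`, and `b` is positive semidefinite (`gaussForm_self_nonneg`): the Gaussian is, up to a
positive factor, the convolution of a narrower Gaussian with itself, so `b w w` is a positive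
multiple of the integral of a square.
-/


open MeasureTheory Real

noncomputable section

/-- The plane `ℝ²` with its Euclidean norm. -/
local notation "P2" => EuclideanSpace ℝ (Fin 2)

lemma gauss_norm_le {τ : ℝ} (hτ : 0 < τ) (x : P2) : ‖gauss τ x‖ ≤ (4 * π * τ)⁻¹ := by
  have hC : 0 ≤ (4 * π * τ)⁻¹ := by positivity
  unfold gauss
  rw [Real.norm_eq_abs, abs_of_nonneg (by positivity)]
  refine mul_le_of_le_one_right hC (Real.exp_le_one_iff.mpr ?_)
  rw [neg_div]
  have : 0 ≤ ‖x‖ ^ 2 / (4 * τ) := by positivity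
  linarith

lemma gauss_sub_comm (τ : ℝ) (x y : P2) : gauss τ (x - y) = gauss τ (y - x) := by
  unfold gauss; rw [norm_sub_rev]

lemma gaussForm_integrable {τ : ℝ} (hτ : 0 < τ) {f g : P2 → ℝ} (hf : Integrable f)
    (hg : Integrable g) :
    Integrable (fun p : P2 × P2 => f p.1 * (gauss τ (p.1 - p.2) * g p.2))
      (volume.prod volume) := by
  have h1 : Integrable (fun p : P2 × P2 => f p.1 * g p.2) (volume.prod volume) := hf.mul_prod hg
  have hc : Continuous (fun p : P2 × P2 => gauss τ (p.1 - p.2)) :=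
    (gauss_continuous τ).comp (continuous_fst.sub continuous_snd)
  have h2 := h1.bdd_mul (c := (4 * π * τ)⁻¹) hc.aestronglyMeasurable
    (Filter.Eventually.of_forall fun p => gauss_norm_le hτ _)
  refine h2.congr (Filter.Eventually.of_forall fun p => ?_)
  simp only
  ring

/-- The bilinear form `(f, g) ↦ ∬ f(x) G_τ(x - y) g(y) dx dy`. -/
def gaussForm (τ : ℝ) (f g : P2 → ℝ) : ℝ :=
  ∫ p : P2 × P2, f p.1 * (gauss τ (p.1 - p.2) * g p.2) ∂(volume.prod volume)

lemma gaussForm_eq {τ : ℝ} (hτ : 0 < τ) {f g : P2 → ℝ} (hf : Integrable f)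
    (hg : Integrable g) : gaussForm τ f g = ∫ x, f x * gconv (gauss τ) g x := by
  unfold gaussForm gconv
  rw [integral_prod _ (gaussForm_integrable hτ hf hg)]
  simp only [integral_const_mul]

lemma mul_gconv_integrable {τ : ℝ} (hτ : 0 < τ) {f g : P2 → ℝ} (hf : Integrable f)
    (hg : Integrable g) : Integrable (fun x => f x * gconv (gauss τ) g x) := by
  have := (gaussForm_integrable hτ hf hg).integral_prod_left
  simp only [integral_const_mul] at this
  exact this

lemma gaussForm_comm (τ : ℝ) (f g : P2 → ℝ) : gaussForm τ f g = gaussForm τ g f := by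
  unfold gaussForm
  rw [← integral_prod_swap]
  refine integral_congr_ae (Filter.Eventually.of_forall fun p => ?_)
  simp only [Prod.fst_swap, Prod.snd_swap]
  rw [gauss_sub_comm]
  ring

lemma gaussForm_add_right {τ : ℝ} (hτ : 0 < τ) {f g h : P2 → ℝ} (hf : Integrable f)
    (hg : Integrable g) (hh : Integrable h) :
    gaussForm τ f (g + h) = gaussForm τ f g + gaussForm τ f h := by
  unfold gaussForm
  rw [← integral_add (gaussForm_integrable hτ hf hg) (gaussForm_integrable hτ hf hh)]
  refine integral_congr_ae (Filter.Eventually.of_forall fun p => ?_)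
  simp only [Pi.add_apply]
  ring

lemma gaussForm_add_left {τ : ℝ} (hτ : 0 < τ) {f g h : P2 → ℝ} (hf : Integrable f)
    (hg : Integrable g) (hh : Integrable h) :
    gaussForm τ (g + h) f = gaussForm τ g f + gaussForm τ h f := by
  rw [gaussForm_comm, gaussForm_add_right hτ hf hg hh, gaussForm_comm τ f g, gaussForm_comm τ f h]

lemma gaussForm_sum_right {ι : Type*} [Fintype ι] {τ : ℝ} (hτ : 0 < τ) {f : P2 → ℝ}
    {g : ι → P2 → ℝ} (hf : Integrable f) (hg : ∀ i, Integrable (g i)) :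
    ∑ j, gaussForm τ f (g j) = gaussForm τ f (fun x => ∑ j, g j x) := by
  unfold gaussForm
  rw [← integral_finsetSum _ fun j _ => gaussForm_integrable hτ hf (hg j)]
  simp only [Finset.mul_sum]

lemma gaussForm_eq_zero {τ : ℝ} (hτ : 0 < τ) {f g : P2 → ℝ} (hf : Integrable f)
    (hg : g =ᵐ[volume] 0) : gaussForm τ f g = 0 := by
  have hgi : Integrable g := (integrable_zero P2 ℝ volume).congr hg.symm
  rw [gaussForm_eq hτ hf hgi]
  have h (x : P2) : gconv (gauss τ) g x = 0 := by
    unfold gconv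
    refine integral_eq_zero_of_ae ?_
    filter_upwards [hg] with y hy
    simp [hy]
  simp [h]

/-! ### Positive semidefiniteness -/

lemma exp_sq_integrable {a : ℝ} (ha : 0 < a) :
    Integrable (fun z : P2 => Real.exp (-a * ‖z‖ ^ 2)) := by
  have := (GaussianFourier.integrable_cexp_neg_mul_sq_norm_add (V := P2) (b := (a : ℂ))
    (by simpa using ha) 0 0).re
  refine this.congr (Filter.Eventually.of_forall fun z => ?_)
  simp only [zero_mul, add_zero]
  rw [show (-(a : ℂ) * (‖z‖ : ℂ) ^ 2) = ((-a * ‖z‖ ^ 2 : ℝ) : ℂ) by push_cast; ring]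
  rw [← Complex.ofReal_exp]
  exact Complex.ofReal_re _

/-- Completing the square: by the parallelogram law,
`|x - z|² + |y - z|² = 2 |z - (x + y)/2|² + |x - y|²/2`. -/
lemma exp_mul_exp (a : ℝ) (x y z : P2) :
    Real.exp (-a * ‖x - z‖ ^ 2) * Real.exp (-a * ‖y - z‖ ^ 2) =
      Real.exp (-(a / 2) * ‖x - y‖ ^ 2) *
        Real.exp (-(2 * a) * ‖z - (2⁻¹ : ℝ) • (x + y)‖ ^ 2) := by
  rw [← Real.exp_add, ← Real.exp_add]
  congr 1
  simp only [EuclideanSpace.norm_sq_eq, Fin.sum_univ_two, PiLp.sub_apply, PiLp.smul_apply,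
    PiLp.add_apply, Real.norm_eq_abs, sq_abs, smul_eq_mul]
  ring

lemma exp_mul_exp_integrable {a : ℝ} (ha : 0 < a) (x y : P2) :
    Integrable (fun z : P2 => Real.exp (-a * ‖x - z‖ ^ 2) * Real.exp (-a * ‖y - z‖ ^ 2)) := by
  simp only [exp_mul_exp]
  exact ((exp_sq_integrable (a := 2 * a) (by positivity)).comp_sub_right _).const_mul _

/-- The semigroup property, with an unevaluated normalization: `G_τ(x - y)` is a positive multiple
of the convolution of two Gaussians of half the variance. -/
lemma gauss_semigroup {τ : ℝ} (hτ : 0 < τ) : ∃ C : ℝ, 0 < C ∧ ∀ x y : P2,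
    gauss τ (x - y) = C * ∫ z : P2, Real.exp (-(1 / (2 * τ)) * ‖x - z‖ ^ 2) *
      Real.exp (-(1 / (2 * τ)) * ‖y - z‖ ^ 2) := by
  have ha : 0 < 2 * (1 / (2 * τ)) := by positivity
  set K : ℝ := ∫ z : P2, Real.exp (-(2 * (1 / (2 * τ))) * ‖z‖ ^ 2) with hK
  have hKpos : 0 < K := integral_exp_pos (exp_sq_integrable ha)
  refine ⟨(4 * π * τ)⁻¹ * K⁻¹, by positivity, fun x y => ?_⟩
  simp only [exp_mul_exp]
  rw [integral_const_mul, integral_sub_right_eq_self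
    (fun z : P2 => Real.exp (-(2 * (1 / (2 * τ))) * ‖z‖ ^ 2)), ← hK]
  unfold gauss
  rw [show -‖x - y‖ ^ 2 / (4 * τ) = -(1 / (2 * τ) / 2) * ‖x - y‖ ^ 2 by field_simp; ring]
  field_simp

/-- Positive semidefiniteness: by the semigroup property and Fubini,
`gaussForm τ w w = C ∫ (∫ w(x) exp(-|x - z|²/(2τ)) dx)² dz`. -/
lemma gaussForm_self_nonneg {τ : ℝ} (hτ : 0 < τ) {w : P2 → ℝ} (hw : Integrable w) :
    0 ≤ gaussForm τ w w := by
  obtain ⟨C, hC, hG⟩ := gauss_semigroup hτ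
  have ha : 0 < 1 / (2 * τ) := by positivity
  set a := 1 / (2 * τ)
  let F : (P2 × P2) × P2 → ℝ := fun q =>
    (w q.1.1 * w q.1.2) * (Real.exp (-a * ‖q.1.1 - q.2‖ ^ 2) * Real.exp (-a * ‖q.1.2 - q.2‖ ^ 2))
  have hFm : AEStronglyMeasurable F ((volume.prod volume).prod volume) := by
    refine AEStronglyMeasurable.mul ?_ ?_
    · exact (hw.mul_prod hw).aestronglyMeasurable.comp_fst
    · exact Continuous.aestronglyMeasurable (by fun_prop)
  have hF : Integrable F ((volume.prod volume).prod volume) := by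
    refine (integrable_prod_iff hFm).mpr ⟨Filter.Eventually.of_forall fun p => ?_, ?_⟩
    · exact (exp_mul_exp_integrable ha p.1 p.2).const_mul (w p.1 * w p.2)
    · have h := ((gaussForm_integrable hτ hw.norm hw.norm).const_mul C⁻¹)
      refine h.congr (Filter.Eventually.of_forall fun p => ?_)
      have : ∀ z, ‖F (p, z)‖ = (‖w p.1‖ * ‖w p.2‖) *
          (Real.exp (-a * ‖p.1 - z‖ ^ 2) * Real.exp (-a * ‖p.2 - z‖ ^ 2)) := by
        intro z
        simp only [F, norm_mul, Real.norm_eq_abs, Real.abs_exp]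
      simp only [this]
      rw [integral_const_mul, hG]
      field_simp
  have h1 : gaussForm τ w w = C * ∫ p : P2 × P2, (∫ z, F (p, z)) ∂(volume.prod volume) := by
    unfold gaussForm
    rw [← integral_const_mul]
    refine integral_congr_ae (Filter.Eventually.of_forall fun p => ?_)
    simp only [F]
    rw [integral_const_mul, hG]
    ring
  rw [h1, integral_integral_swap (f := fun p z => F (p, z)) hF]
  refine mul_nonneg hC.le (integral_nonneg fun z => ?_)
  have h2 : ∀ p : P2 × P2, F (p, z) =
      (w p.1 * Real.exp (-a * ‖p.1 - z‖ ^ 2)) * (w p.2 * Real.exp (-a * ‖p.2 - z‖ ^ 2)) := by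
    intro p; simp only [F]; ring
  simp only [h2, Pi.zero_apply]
  rw [integral_prod_mul (fun x => w x * Real.exp (-a * ‖x - z‖ ^ 2))
    (fun x => w x * Real.exp (-a * ‖x - z‖ ^ 2))]
  exact mul_self_nonneg _

/-! ### Thresholding and the class `Λ₁` -/

lemma gconv_measurable_s5 (τ : ℝ) {g : P2 → ℝ} (hg : Measurable g) :
    Measurable (gconv (gauss τ) g) := by
  have hc : Measurable (fun p : P2 × P2 => gauss τ (p.1 - p.2) * g p.2) :=
    (((gauss_continuous τ).comp (continuous_fst.sub continuous_snd)).measurable).mul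
      (hg.comp measurable_snd)
  exact (hc.stronglyMeasurable.integral_prod_right (ν := volume)).measurable

/-- The tie-breaking rule selects exactly one index, and this index is a minimizer. -/
lemma exists_first_min {n : ℕ} (hn : 2 ≤ n) (f : Fin n → ℝ) : ∃ m, (∀ l, f m ≤ f l) ∧
    ∀ i, ((∀ l, f i ≤ f l) ∧ (∀ l, (∀ l', f l ≤ f l') → i ≤ l)) ↔ i = m := by
  classical
  have : Nonempty (Fin n) := ⟨⟨0, by omega⟩⟩
  let S : Finset (Fin n) := Finset.univ.filter fun i => ∀ l, f i ≤ f l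
  have hS : S.Nonempty := by
    obtain ⟨i, hi⟩ := Finite.exists_min f
    exact ⟨i, by simpa [S] using hi⟩
  have hm : ∀ l, f (S.min' hS) ≤ f l := by simpa [S] using S.min'_mem hS
  refine ⟨S.min' hS, hm, fun i => ⟨fun h => ?_, ?_⟩⟩
  · exact le_antisymm (h.2 _ hm) (S.min'_le i (by simpa [S] using h.1))
  · rintro rfl
    exact ⟨hm, fun l hl => S.min'_le l (by simpa [S] using hl)⟩

lemma InLambda1.ae_norm_le {n : ℕ} {Ω : Set P2} {u : Fin n → P2 → ℝ} (hu : InLambda1 Ω u)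
    (i : Fin n) : ∀ᵐ x ∂(volume.restrict Ω), ‖u i x‖ ≤ 1 := by
  filter_upwards [hu.2.2] with x hx
  rcases hx.1 i with h | h <;> simp [h]

lemma InLambda1.integrable {n : ℕ} {Ω : Set P2} (hΩfin : volume Ω ≠ ⊤)
    {u : Fin n → P2 → ℝ} (hu : InLambda1 Ω u) (i : Fin n) : Integrable (u i) := by
  have h : IntegrableOn (u i) Ω :=
    Measure.integrableOn_of_bounded hΩfin (hu.1 i).aestronglyMeasurable (hu.ae_norm_le i)
  exact h.integrable_of_forall_notMem_eq_zero fun x hx => hu.2.1 i x hx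

lemma InLambda1.setIntegral_eq {n : ℕ} {Ω : Set P2} (hΩfin : volume Ω ≠ ⊤) {τ : ℝ} (hτ : 0 < τ)
    {u : Fin n → P2 → ℝ} (hu : InLambda1 Ω u) {g : P2 → ℝ} (hg : Integrable g) (i : Fin n) :
    ∫ x in Ω, u i x * gconv (gauss τ) g x = gaussForm τ (u i) g := by
  rw [gaussForm_eq hτ (hu.integrable hΩfin i) hg]
  exact setIntegral_eq_integral_of_forall_compl_eq_zero fun x hx => by simp [hu.2.1 i x hx]

/-! ### Energy decay -/

/-- Expansion of the off-diagonal quadratic form at `u' = u + w`: the second-order term is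
nonpositive since `∑ᵢ wᵢ = 0` a.e. turns it into `-∑ᵢ gaussForm τ wᵢ wᵢ`. -/
lemma offdiag_le {n : ℕ} {τ : ℝ} (hτ : 0 < τ) {u u' : Fin n → P2 → ℝ}
    (hu : ∀ i, Integrable (u i)) (hu' : ∀ i, Integrable (u' i))
    (hsum : (fun x => ∑ i, (u' i - u i) x) =ᵐ[volume] 0) :
    ∑ i, ∑ j ∈ Finset.univ.erase i, gaussForm τ (u' i) (u' j) ≤
      (∑ i, ∑ j ∈ Finset.univ.erase i, gaussForm τ (u i) (u j)) +
        2 * ((∑ i, ∑ j ∈ Finset.univ.erase i, gaussForm τ (u' i) (u j)) -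
          ∑ i, ∑ j ∈ Finset.univ.erase i, gaussForm τ (u i) (u j)) := by
  have hw : ∀ i, Integrable (u' i - u i) := fun i => (hu' i).sub (hu i)
  have hexp : ∀ i j, gaussForm τ (u' i - u i) (u' j - u j) =
      gaussForm τ (u' i) (u' j) - gaussForm τ (u' i) (u j) - gaussForm τ (u' j) (u i)
        + gaussForm τ (u i) (u j) := by
    intro i j
    have h1 := gaussForm_add_left hτ (hw j) (hw i) (hu i)
    have h2 := gaussForm_add_right hτ (hu' i) (hw j) (hu j)
    have h3 := gaussForm_add_right hτ (hu i) (hw j) (hu j)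
    simp only [sub_add_cancel] at h1 h2 h3
    rw [gaussForm_comm τ (u' j) (u i)]
    linarith
  have hzero : ∑ i, ∑ j, gaussForm τ (u' i - u i) (u' j - u j) = 0 := by
    refine Finset.sum_eq_zero fun i _ => ?_
    rw [gaussForm_sum_right hτ (hw i) hw]
    exact gaussForm_eq_zero hτ (hw i) hsum
  have hdiag : 0 ≤ ∑ i, gaussForm τ (u' i - u i) (u' i - u i) :=
    Finset.sum_nonneg fun i _ => gaussForm_self_nonneg hτ (hw i)
  simp only [hexp, Finset.sum_add_distrib, Finset.sum_sub_distrib] at hzero hdiag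
  rw [Finset.sum_comm (f := fun i j => gaussForm τ (u' j) (u i))] at hzero
  simp only [Finset.sum_erase_eq_sub (Finset.mem_univ _), Finset.sum_sub_distrib]
  linarith

/-- **Energy decay of the ICTM thresholding step.**
Given `uᵏ ∈ Λ₁` and `φᵢᵏ = λᵢ eᵢ + 2 μ √(π/τ) ∑_{j≠i} G_τ * uⱼᵏ`, the thresholding
update (`uᵢᵏ⁺¹(x) = 1` iff `i` is the smallest index minimizing `l ↦ φₗᵏ(x)`)
yields `uᵏ⁺¹ ∈ Λ₁` and, for any `τ > 0`, does not increase the ICTM energy. -/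
theorem ictm_energy_decay {n : ℕ} (hn : 2 ≤ n)
    (Ω : Set (EuclideanSpace ℝ (Fin 2))) (hΩm : MeasurableSet Ω)
    (hΩb : Bornology.IsBounded Ω) (hΩpos : 0 < volume Ω) (hΩfin : volume Ω ≠ ⊤)
    (τ μ : ℝ) (hτ : 0 < τ) (hμ : 0 < μ)
    (lam : Fin n → ℝ) (hlam : ∀ i, 0 < lam i)
    (e : Fin n → EuclideanSpace ℝ (Fin 2) → ℝ)
    (he_meas : ∀ i, Measurable (e i))
    (he_int : ∀ i, IntegrableOn (e i) Ω)
    (he_nonneg : ∀ i x, 0 ≤ e i x)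
    (u : Fin n → EuclideanSpace ℝ (Fin 2) → ℝ) (hu : InLambda1 Ω u)
    (φ : Fin n → EuclideanSpace ℝ (Fin 2) → ℝ)
    (hφ : ∀ i x, φ i x = lam i * e i x +
      2 * μ * Real.sqrt (π / τ) *
        ∑ j ∈ Finset.univ.erase i, gconv (gauss τ) (u j) x)
    (u' : Fin n → EuclideanSpace ℝ (Fin 2) → ℝ)
    (hu'out : ∀ i, ∀ x, x ∉ Ω → u' i x = 0)
    (hu'thresh : ∀ x ∈ Ω, ∀ i, u' i x =
      if (∀ l, φ i x ≤ φ l x) ∧ (∀ l, (∀ l', φ l x ≤ φ l' x) → i ≤ l)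
      then 1 else 0) :
    InLambda1 Ω u' ∧ ictmEnergy Ω τ μ lam e u' ≤ ictmEnergy Ω τ μ lam e u := by
  have hint := hu.integrable hΩfin
  have hφm : ∀ i, Measurable (φ i) := by
    intro i
    rw [show φ i = fun x => _ from funext (hφ i)]
    exact ((he_meas i).const_mul _).add
      ((Finset.measurable_fun_sum _ fun j _ => gconv_measurable_s5 τ (hu.1 j)).const_mul _)
  -- On `Ω` the update is the indicator of the selected minimizing index.
  have hsel : ∀ x ∈ Ω, ∃ m, (∀ l, φ m x ≤ φ l x) ∧ ∀ i, u' i x = if i = m then 1 else 0 := by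
    intro x hx
    obtain ⟨m, hm, h⟩ := exists_first_min hn (fun i => φ i x)
    refine ⟨m, hm, fun i => ?_⟩
    rw [hu'thresh x hx i]
    simp only [h i]
  have hu' : InLambda1 Ω u' := by
    refine ⟨fun i => ?_, hu'out, ?_⟩
    · classical
      let A : Set (EuclideanSpace ℝ (Fin 2)) := Ω ∩
        {x | (∀ l, φ i x ≤ φ l x) ∧ (∀ l, (∀ l', φ l x ≤ φ l' x) → i ≤ l)}
      have hmin : ∀ l, MeasurableSet {x | ∀ l', φ l x ≤ φ l' x} := by
        intro l
        rw [Set.ofPred_forall]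
        exact MeasurableSet.iInter fun l' => measurableSet_le (hφm l) (hφm l')
      have hA : MeasurableSet A := by
        refine hΩm.inter ?_
        rw [Set.ofPred_and, Set.ofPred_forall (fun l x => (∀ l', φ l x ≤ φ l' x) → i ≤ l)]
        refine (hmin i).inter (MeasurableSet.iInter fun l => ?_)
        exact (hmin l).imp (MeasurableSet.const _)
      have : u' i = A.indicator (fun _ => (1 : ℝ)) := by
        funext x
        by_cases hx : x ∈ Ω
        · rw [hu'thresh x hx i]
          simp [A, Set.indicator, hx]
        · rw [hu'out i x hx]
          simp [A, Set.indicator, hx]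
      rw [this]
      exact measurable_const.indicator hA
    · refine (ae_restrict_iff' hΩm).mpr (Filter.Eventually.of_forall fun x hx => ?_)
      obtain ⟨m, -, h⟩ := hsel x hx
      refine ⟨fun i => ?_, by simp [h]⟩
      rw [h i]
      split_ifs <;> simp
  refine ⟨hu', ?_⟩
  have hint' := hu'.integrable hΩfin
  have hsum : (fun x => ∑ i, (u' i - u i) x) =ᵐ[volume] 0 := by
    have h1 := (ae_restrict_iff' hΩm).mp hu.2.2
    have h2 := (ae_restrict_iff' hΩm).mp hu'.2.2
    filter_upwards [h1, h2] with x hx1 hx2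
    simp only [Pi.sub_apply, Finset.sum_sub_distrib, Pi.zero_apply]
    by_cases hx : x ∈ Ω
    · rw [(hx1 hx).2, (hx2 hx).2, sub_self]
    · simp [hu.2.1 _ x hx, hu'.2.1 _ x hx]
  have hquad := offdiag_le hτ hint hint' hsum
  -- The linearized energy `v ↦ ∑ᵢ ∫_Ω vᵢ φᵢ`, split into its fidelity and interaction parts.
  have hve : ∀ v : Fin n → EuclideanSpace ℝ (Fin 2) → ℝ, InLambda1 Ω v → ∀ i,
      IntegrableOn (fun x => v i x * e i x) Ω := fun v hv i =>
    (he_int i).bdd_mul (c := 1) (hv.1 i).aestronglyMeasurable (hv.ae_norm_le i)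
  have hvG : ∀ v : Fin n → EuclideanSpace ℝ (Fin 2) → ℝ, InLambda1 Ω v → ∀ i j,
      IntegrableOn (fun x => v i x * gconv (gauss τ) (u j) x) Ω := fun v hv i j =>
    (mul_gconv_integrable hτ (hv.integrable hΩfin i) (hint j)).integrableOn
  have hvφ : ∀ v : Fin n → EuclideanSpace ℝ (Fin 2) → ℝ, ∀ i x, v i x * φ i x =
      lam i * (v i x * e i x) + 2 * μ * Real.sqrt (π / τ) *
        ∑ j ∈ Finset.univ.erase i, v i x * gconv (gauss τ) (u j) x := by
    intro v i x
    rw [hφ, ← Finset.mul_sum]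
    ring
  have hvφi : ∀ v : Fin n → EuclideanSpace ℝ (Fin 2) → ℝ, InLambda1 Ω v → ∀ i,
      IntegrableOn (fun x => v i x * φ i x) Ω := by
    intro v hv i
    simp only [hvφ]
    exact ((hve v hv i).const_mul _).add
      ((integrable_finsetSum _ fun j _ => hvG v hv i j).const_mul _)
  have hlin : ∀ v : Fin n → EuclideanSpace ℝ (Fin 2) → ℝ, InLambda1 Ω v →
      ∫ x in Ω, ∑ i, v i x * φ i x = (∑ i, lam i * ∫ x in Ω, v i x * e i x) +
        2 * μ * Real.sqrt (π / τ) *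
          ∑ i, ∑ j ∈ Finset.univ.erase i, gaussForm τ (v i) (u j) := by
    intro v hv
    rw [integral_finsetSum _ fun i _ => hvφi v hv i, Finset.mul_sum, ← Finset.sum_add_distrib]
    refine Finset.sum_congr rfl fun i _ => ?_
    simp only [hvφ]
    rw [integral_add ((hve v hv i).const_mul _)
      ((integrable_finsetSum _ fun j _ => hvG v hv i j).const_mul _),
      integral_const_mul, integral_const_mul, integral_finsetSum _ fun j _ => hvG v hv i j]
    simp only [hv.setIntegral_eq hΩfin hτ (hint _) i]
  have hmono : ∫ x in Ω, ∑ i, u' i x * φ i x ≤ ∫ x in Ω, ∑ i, u i x * φ i x := by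
    refine integral_mono_ae (integrable_finsetSum _ fun i _ => hvφi u' hu' i)
      (integrable_finsetSum _ fun i _ => hvφi u hu i) ?_
    filter_upwards [hu.2.2, ae_restrict_mem hΩm] with x hx hxΩ
    obtain ⟨m, hm, h⟩ := hsel x hxΩ
    calc ∑ i, u' i x * φ i x = φ m x := by simp [h]
      _ = ∑ i, u i x * φ m x := by rw [← Finset.sum_mul, hx.2, one_mul]
      _ ≤ ∑ i, u i x * φ i x := by
        refine Finset.sum_le_sum fun i _ => mul_le_mul_of_nonneg_left (hm i) ?_
        rcases hx.1 i with h0 | h0 <;> simp [h0]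
  rw [hlin u' hu', hlin u hu] at hmono
  unfold ictmEnergy
  simp only [hu.setIntegral_eq hΩfin hτ (hint _), hu'.setIntegral_eq hΩfin hτ (hint' _)]
  have hc : 0 ≤ μ * Real.sqrt (π / τ) := by positivity
  have := mul_le_mul_of_nonneg_left hquad hc
  linarith
end
end
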